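/- Assume m ≥ 2 and let C ⊆ F_{q^m}^n be a nonzero linear code. Then: if n ≤ m, d_R(C) ≤ n − dim C + 1; if n > m and dim C = 1, d_R(C) ≤ (m−1)·dim C + 1 = m; and if n > m and dim C ≥ 2, d_R(C) ≤ (m/n)(n − dim C) + 1, where the last inequality is understood over the rationals. -/

import Mathlib

open scoped BigOperators

noncomputable section

variable (q : ℕ) (Fq : Type*) {Fqm : Type*} [Field Fq] [Field Fqm] [Algebra Fq Fqm]

/-- `V = V^q`: the image of `V` under the coordinatewise `q`-th power map equals `V`
(membership in the family `Γ(F_{q^m}^n)`). -/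
def IsGalClosed {n : ℕ} (V : Submodule Fqm (Fin n → Fqm)) : Prop :=
  (fun v : Fin n → Fqm => fun i => v i ^ q) '' (V : Set (Fin n → Fqm)) =
    (V : Set (Fin n → Fqm))

/-- The `i`-th relative dimension/intersection profile (RDIP) of `C1` and `C2`. -/
noncomputable def RDIP {n : ℕ} (C1 C2 : Submodule Fqm (Fin n → Fqm)) (i : ℕ) : ℕ :=
  sSup {d : ℕ | ∃ V : Submodule Fqm (Fin n → Fqm), IsGalClosed q V ∧
    Module.finrank Fqm ↥V = i ∧
    d = Module.finrank Fqm ↥(C1 ⊓ V) - Module.finrank Fqm ↥(C2 ⊓ V)}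

/-- The `i`-th relative generalized rank weight (RGRW) of `C1` and `C2`. -/
noncomputable def RGRW {n : ℕ} (C1 C2 : Submodule Fqm (Fin n → Fqm)) (i : ℕ) : ℕ :=
  sInf {d : ℕ | ∃ V : Submodule Fqm (Fin n → Fqm), IsGalClosed q V ∧
    d = Module.finrank Fqm ↥V ∧
    i ≤ Module.finrank Fqm ↥(C1 ⊓ V) - Module.finrank Fqm ↥(C2 ⊓ V)}

/-- The rank weight `d_R(x,0)` of a vector: the `F_q`-dimension of the `F_q`-span of
its coordinates. -/
noncomputable def rankWeight {ι : Type*} (x : ι → Fqm) : ℕ :=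
  Module.finrank Fq ↥(Submodule.span Fq (Set.range x))

/-- The minimum rank distance of a (nonzero) linear code. -/
noncomputable def minRankDist {ι : Type*} (C : Submodule Fqm (ι → Fqm)) : ℕ :=
  sInf {d : ℕ | ∃ x, x ∈ C ∧ x ≠ 0 ∧ d = rankWeight Fq x}

/-- The dual code with respect to the standard bilinear form `⟨x,y⟩ = ∑ i, x i * y i`. -/
def dualCode {n : ℕ} (V : Submodule Fqm (Fin n → Fqm)) : Submodule Fqm (Fin n → Fqm) where
  carrier := {x | ∀ v ∈ V, ∑ i, x i * v i = 0}
  add_mem' := by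
    intro a b ha hb v hv
    have h1 := ha v hv
    have h2 := hb v hv
    simp only [Set.mem_setOf_eq] at *
    simp only [Pi.add_apply, add_mul]
    rw [Finset.sum_add_distrib, h1, h2, add_zero]
  zero_mem' := by
    intro v hv
    simp
  smul_mem' := by
    intro c x hx v hv
    have h := hx v hv
    simp only [Set.mem_setOf_eq] at *
    simp only [Pi.smul_apply, smul_eq_mul, mul_assoc]
    rw [← Finset.mul_sum, h, mul_zero]

/-!
Let `C` be a code of length `n`, dimension `k` and minimum rank distance `d ≥ 1` over an extension
of degree `m`. A space of vectors of rank weight at most `d - 1` meets `C` only in `0`, so its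
dimension and that of `C` add up to at most the dimension of the whole space. The vectors supported
on `d - 1` fixed coordinates form such a space over `Fqm`, whence `k + (d - 1) ≤ n`. The vectors
with all coordinates in a fixed `Fq`-subspace of `Fqm` of dimension `d - 1` form another one over
`Fq`, whence `m * k + n * (d - 1) ≤ m * n`, that is, `d ≤ (m / n) * (n - k) + 1`.
-/

open Module

theorem finrank_submodule_pi_univ {R ι : Type*} [Fintype ι] [Semiring R] [StrongRankCondition R]
    {M : ι → Type*} [∀ i, AddCommMonoid (M i)] [∀ i, Module R (M i)] (W : ∀ i, Submodule R (M i))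
    [∀ i, Module.Free R (W i)] [∀ i, Module.Finite R (W i)] :
    finrank R (Submodule.pi Set.univ W) = ∑ i, finrank R (W i) := by
  let e : Submodule.pi Set.univ W ≃ₗ[R] ∀ i, W i :=
    { toFun := fun x i => ⟨x.1 i, x.2 i trivial⟩
      invFun := fun y => ⟨fun i => y i, fun i _ => (y i).2⟩
      map_add' := fun _ _ => rfl
      map_smul' := fun _ _ => rfl }
  rw [e.finrank_eq, finrank_pi_fintype]

theorem finrank_submodule_fun_le_card {R ι : Type*} [Fintype ι] [Semiring R]
    [StrongRankCondition R] (C : Submodule R (ι → R)) : finrank R C ≤ Fintype.card ι :=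
  C.finrank_le.trans_eq (finrank_fintype_fun_eq_card R)

theorem finrank_iInf_ker_proj_compl {R ι : Type*} [Semiring R] [StrongRankCondition R]
    (T : Finset ι) :
    finrank R (⨅ i ∈ (T : Set ι)ᶜ, LinearMap.ker (LinearMap.proj i : (ι → R) →ₗ[R] R) :
      Submodule R (ι → R)) = T.card := by
  classical
  let e := LinearMap.iInfKerProjEquiv R (fun _ : ι => R) (disjoint_compl_right (a := (T : Set ι)))
    (Set.union_compl_self _).ge
  rw [e.finrank_eq, finrank_fintype_fun_eq_card]
  exact Fintype.card_coe T

theorem exists_submodule_finrank_eq {R M : Type*} [Semiring R] [StrongRankCondition R]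
    [AddCommMonoid M] [Module R M] {e : ℕ} (he : e ≤ finrank R M) :
    ∃ W : Submodule R M, finrank R W = e := by
  have := nontrivial_of_invariantBasisNumber R
  obtain ⟨v, hv⟩ := exists_linearIndependent_of_le_finrank he
  exact ⟨Submodule.span R (Set.range v), by simpa using finrank_span_eq_card hv⟩

section RankWeight

variable {ι : Type*} {x : ι → Fqm}

theorem rankWeight_le_finrank_of_forall_mem (W : Submodule Fq Fqm) [FiniteDimensional Fq W]
    (hx : ∀ i, x i ∈ W) : rankWeight Fq x ≤ finrank Fq W :=
  Submodule.finrank_mono (Submodule.span_le.2 (Set.range_subset_iff.2 hx))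

theorem rankWeight_le_finrank [FiniteDimensional Fq Fqm] (x : ι → Fqm) :
    rankWeight Fq x ≤ finrank Fq Fqm :=
  Submodule.finrank_le _

theorem rankWeight_le_card_of_forall_notMem (T : Finset ι) (hx : ∀ i ∉ T, x i = 0) :
    rankWeight Fq x ≤ T.card := by
  classical
  have hmem : ∀ i, x i ∈ Submodule.span Fq (T.image x : Set Fqm) := fun i => by
    by_cases hi : i ∈ T
    · exact Submodule.subset_span (Finset.mem_image_of_mem x hi)
    · exact hx i hi ▸ Submodule.zero_mem _
  calc rankWeight Fq x
      ≤ finrank Fq (Submodule.span Fq (T.image x : Set Fqm)) :=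
        rankWeight_le_finrank_of_forall_mem Fq _ hmem
    _ ≤ (T.image x).card := finrank_span_finset_le_card _
    _ ≤ T.card := Finset.card_image_le

theorem rankWeight_le_card [Fintype ι] (x : ι → Fqm) : rankWeight Fq x ≤ Fintype.card ι :=
  rankWeight_le_card_of_forall_notMem Fq Finset.univ fun i hi => (hi (Finset.mem_univ i)).elim

end RankWeight

section MinRankDist

variable {ι : Type*}

theorem eq_zero_of_rankWeight_lt_minRankDist {C : Submodule Fqm (ι → Fqm)} {x : ι → Fqm}
    (hx : x ∈ C) (hlt : rankWeight Fq x < minRankDist Fq C) : x = 0 := by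
  by_contra h0
  exact Nat.notMem_of_lt_sInf hlt ⟨x, hx, h0, rfl⟩

variable (C : Submodule Fqm (ι → Fqm))

theorem minRankDist_le_of_forall_rankWeight_le {b : ℕ} (hb : ∀ x : ι → Fqm, rankWeight Fq x ≤ b) :
    minRankDist Fq C ≤ b := by
  -- For `C = ⊥` the infimum is over the empty set, and `sInf ∅ = 0`.
  rcases Nat.eq_zero_or_pos (minRankDist Fq C) with h | h
  · exact h.trans_le b.zero_le
  · obtain ⟨x, -, -, hx⟩ := Nat.sInf_mem (Nat.nonempty_of_pos_sInf h)
    exact hx.trans_le (hb x)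

theorem minRankDist_le_finrank [FiniteDimensional Fq Fqm] :
    minRankDist Fq C ≤ finrank Fq Fqm :=
  minRankDist_le_of_forall_rankWeight_le Fq C (rankWeight_le_finrank Fq)

variable [Fintype ι]

theorem minRankDist_le_card : minRankDist Fq C ≤ Fintype.card ι :=
  minRankDist_le_of_forall_rankWeight_le Fq C (rankWeight_le_card Fq)

theorem finrank_add_minRankDist_le : finrank Fqm C + minRankDist Fq C ≤ Fintype.card ι + 1 := by
  rcases hd : minRankDist Fq C with _ | e
  · exact (finrank_submodule_fun_le_card C).trans (Nat.le_succ _)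
  obtain ⟨T, -, hT⟩ : ∃ T ⊆ (Finset.univ : Finset ι), T.card = e :=
    Finset.exists_subset_card_eq <| by
      have := minRankDist_le_card Fq C
      rw [Finset.card_univ]
      omega
  let V : Submodule Fqm (ι → Fqm) := ⨅ i ∈ (T : Set ι)ᶜ, LinearMap.ker (LinearMap.proj i)
  have hdisj : Disjoint C V := by
    refine Submodule.disjoint_def.2 fun x hxC hxV =>
      eq_zero_of_rankWeight_lt_minRankDist Fq hxC ?_
    have hsupp : ∀ i ∉ T, x i = 0 := by simpa [V, Submodule.mem_iInf] using hxV
    rw [hd, ← hT, Nat.lt_succ_iff]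
    exact rankWeight_le_card_of_forall_notMem Fq T hsupp
  have hV : finrank Fqm V = e := (finrank_iInf_ker_proj_compl T).trans hT
  have hdim := Submodule.finrank_add_finrank_le_of_disjoint hdisj
  rw [hV, finrank_fintype_fun_eq_card] at hdim
  omega

theorem finrank_mul_finrank_add_card_mul_minRankDist_le [FiniteDimensional Fq Fqm] :
    finrank Fq Fqm * finrank Fqm C + Fintype.card ι * minRankDist Fq C ≤
      Fintype.card ι * (finrank Fq Fqm + 1) := by
  rcases hd : minRankDist Fq C with _ | e
  · nlinarith [finrank_submodule_fun_le_card C]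
  obtain ⟨W, hW⟩ : ∃ W : Submodule Fq Fqm, finrank Fq W = e :=
    exists_submodule_finrank_eq <| by
      have := minRankDist_le_finrank Fq C
      omega
  have hdisj : Disjoint (C.restrictScalars Fq) (Submodule.pi Set.univ fun _ => W) := by
    refine Submodule.disjoint_def.2 fun x hxC hxW =>
      eq_zero_of_rankWeight_lt_minRankDist Fq hxC ?_
    rw [hd, ← hW, Nat.lt_succ_iff]
    exact rankWeight_le_finrank_of_forall_mem Fq W fun i => hxW i trivial
  have hC : finrank Fq (C.restrictScalars Fq) = finrank Fq Fqm * finrank Fqm C :=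
    (finrank_mul_finrank Fq Fqm C).symm
  have hdim := Submodule.finrank_add_finrank_le_of_disjoint hdisj
  rw [hC, finrank_submodule_pi_univ, finrank_pi_fintype] at hdim
  simp only [hW, Finset.sum_const, Finset.card_univ, smul_eq_mul] at hdim
  linarith

end MinRankDist

theorem stmt10_general {ι : Type*} [Fintype ι] [FiniteDimensional Fq Fqm]
    (C : Submodule Fqm (ι → Fqm)) (hC : C ≠ ⊥) :
    minRankDist Fq C ≤ Fintype.card ι - finrank Fqm C + 1 ∧
    minRankDist Fq C ≤ finrank Fq Fqm ∧
    (minRankDist Fq C : ℚ) ≤ (finrank Fq Fqm : ℚ) / (Fintype.card ι : ℚ) *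
      ((Fintype.card ι : ℚ) - (finrank Fqm C : ℚ)) + 1 := by
  have hk : 0 < finrank Fqm C := Submodule.one_le_finrank_iff.2 hC
  have hkn : finrank Fqm C ≤ Fintype.card ι := finrank_submodule_fun_le_card C
  refine ⟨?_, minRankDist_le_finrank Fq C, ?_⟩
  · have := finrank_add_minRankDist_le Fq C
    omega
  · have hn : (0 : ℚ) < Fintype.card ι := by exact_mod_cast hk.trans_le hkn
    have hbound : (finrank Fq Fqm * finrank Fqm C + Fintype.card ι * minRankDist Fq C : ℚ) ≤
        Fintype.card ι * (finrank Fq Fqm + 1) := by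
      exact_mod_cast finrank_mul_finrank_add_card_mul_minRankDist_le Fq C
    rw [← sub_le_iff_le_add, div_mul_eq_mul_div, le_div_iff₀ hn]
    linarith

/-- Assume `m ≥ 2` and let `C ⊆ F_{q^m}^n` be a nonzero linear code.
If `n ≤ m` then `d_R(C) ≤ n - dim C + 1`; if `n > m` and `dim C = 1` then
`d_R(C) ≤ (m-1)·dim C + 1 = m`; and if `n > m` and `dim C ≥ 2` then
`d_R(C) ≤ (m/n)(n - dim C) + 1` (over the rationals). -/
theorem stmt10 (m n : ℕ) [Fintype Fq] [Fintype Fqm]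
    (hq : Fintype.card Fq = q) (hm : Module.finrank Fq Fqm = m) (hm2 : 2 ≤ m)
    (C : Submodule Fqm (Fin n → Fqm)) (hC : C ≠ ⊥) :
    (n ≤ m → minRankDist Fq C ≤ n - Module.finrank Fqm ↥C + 1) ∧
    (m < n → Module.finrank Fqm ↥C = 1 →
      minRankDist Fq C ≤ (m - 1) * Module.finrank Fqm ↥C + 1 ∧
      (m - 1) * Module.finrank Fqm ↥C + 1 = m) ∧
    (m < n → 2 ≤ Module.finrank Fqm ↥C →
      (minRankDist Fq C : ℚ) ≤
        (m : ℚ) / (n : ℚ) * ((n : ℚ) - (Module.finrank Fqm ↥C : ℚ)) + 1) := by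
  obtain ⟨hSingleton, hdegree, hratio⟩ := stmt10_general Fq C hC
  subst hm
  rw [Fintype.card_fin] at hSingleton hratio
  exact ⟨fun _ => hSingleton, fun _ hk => by rw [hk]; omega, fun _ _ => hratio⟩

end
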